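/- Fix β > 0, d ≥ 1, s ≥ 0 and u ≥ ℓ ≥ 0, and suppose f ∈ A(s, ℓ, u). Then for all R > 0 and all p ≥ p_M(s, ℓ) there exists a constant L_M = L_M(p, R) > 0 such that for all probability measures μ, ν ∈ P_{p,R}(ℝ^d), |M_β(μ) − M_β(ν)| ≤ L_M · W_p(μ, ν). -/

import Mathlib

open MeasureTheory ENNReal
open scoped NNReal

noncomputable section

/-- Euclidean space `ℝ^d`. -/
abbrev Rd (d : ℕ) := EuclideanSpace ℝ (Fin d)

/-- The weight function `x ↦ exp (-β f x)`. -/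
def wFn (β : ℝ) {d : ℕ} (f : Rd d → ℝ) (x : Rd d) : ℝ := Real.exp (-β * f x)

/-- The weighted mean `M_β(μ) = (∫ x e^{-β f x} dμ) / (∫ e^{-β f x} dμ)`. -/
def wMean (β : ℝ) {d : ℕ} (f : Rd d → ℝ) (μ : Measure (Rd d)) : Rd d :=
  (∫ x, wFn β f x ∂μ)⁻¹ • ∫ x, wFn β f x • x ∂μ

/-- The weighted covariance `C_β(μ)`, a `d × d` matrix. -/
def wCov (β : ℝ) {d : ℕ} (f : Rd d → ℝ) (μ : Measure (Rd d)) :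
    Matrix (Fin d) (Fin d) ℝ := fun i j =>
  (∫ x, wFn β f x ∂μ)⁻¹ *
    ∫ x, wFn β f x * ((x i - wMean β f μ i) * (x j - wMean β f μ j)) ∂μ

/-- Frobenius norm of a matrix. -/
def frobNorm {m n : ℕ} (A : Matrix (Fin m) (Fin n) ℝ) : ℝ :=
  Real.sqrt (∑ i, ∑ j, (A i j) ^ 2)

/-- `S` is the (unique) positive semidefinite square root of `A`. -/
def IsPSDSqrt {d : ℕ} (S A : Matrix (Fin d) (Fin d) ℝ) : Prop :=
  S.PosSemidef ∧ S * S = A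

/-- `μ ∈ P_{p,R}`: the `p`-th moment of `μ` is bounded, `(∫ |x|^p dμ)^{1/p} ≤ R`. -/
def MomLE (p R : ℝ) {d : ℕ} (μ : Measure (Rd d)) : Prop :=
  ∫⁻ x, (‖x‖₊ : ℝ≥0∞) ^ p ∂μ ≤ ENNReal.ofReal (R ^ p)

/-- `μ ∈ P_p`: the `p`-th moment of `μ` is finite. -/
def MomFin (p : ℝ) {d : ℕ} (μ : Measure (Rd d)) : Prop :=
  ∫⁻ x, (‖x‖₊ : ℝ≥0∞) ^ p ∂μ < ⊤

/-- The Wasserstein-`p` distance between two probability measures on `ℝ^d`: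
the infimum over couplings `π` of `μ` and `ν` of `(∬ |x - y|^p dπ)^{1/p}`. -/
def Wp (p : ℝ) {d : ℕ} (μ ν : Measure (Rd d)) : ℝ :=
  (sInf {c : ℝ≥0∞ | ∃ π : Measure (Rd d × Rd d),
      π.map Prod.fst = μ ∧ π.map Prod.snd = ν ∧
      c = (∫⁻ z, (‖z.1 - z.2‖₊ : ℝ≥0∞) ^ p ∂π) ^ (1 / p)}).toReal

/-- `f_* = inf f`. -/
def fStar {d : ℕ} (f : Rd d → ℝ) : ℝ := sInf (Set.range f)

/-- The class `A(s, ℓ, u)` of objective functions: `f` is bounded from below,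
locally Lipschitz with growth exponent `s`, and `f - inf f` grows at least like
`|x|^ℓ` and at most like `|x|^u`. -/
structure ClassA {d : ℕ} (s ℓ u : ℝ) (f : Rd d → ℝ) : Prop where
  bddBelow : BddBelow (Set.range f)
  lip : ∃ Lf > 0, ∀ x y : Rd d, |f x - f y| ≤ Lf * (1 + ‖x‖ + ‖y‖) ^ s * ‖x - y‖
  growth_lower : ∃ cl > 0, ∃ Cl > 0, ∀ x : Rd d, cl * ‖x‖ ^ ℓ - Cl ≤ f x - fStar f
  growth_upper : ∃ cu > 0, ∃ Cu > 0, ∀ x : Rd d, f x - fStar f ≤ cu * ‖x‖ ^ u + Cu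

/-- `p_M(s, ℓ) = s + 2` if `ℓ = 0`, and `1` if `ℓ > 0`. -/
def pM (s ℓ : ℝ) : ℝ := if ℓ = 0 then s + 2 else 1

/-- `p_C(s, ℓ) = s + 3` if `ℓ = 0`, and `1` if `ℓ > 0`. -/
def pC (s ℓ : ℝ) : ℝ := if ℓ = 0 then s + 3 else 1

/-!
Write `w = exp (-β f)`. Both `w` and `x ↦ w x • x` are locally Lipschitz with a local Lipschitz
constant of polynomial order `p - 1`. If `ℓ = 0` then `w` is merely bounded and inherits the order
`s` of `f`, and the factor `x` costs one more power, which is why `p ≥ s + 2`. If `ℓ > 0` then `w`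
decays faster than any power of `1 + ‖x‖` grows, so both functions are globally Lipschitz and
`p ≥ 1` suffices.

For such a function `h` and a coupling `π` of `μ` and `ν`, Hölder's inequality with exponents
`p / (p - 1)` and `p` bounds `‖∫ h ∂μ - ∫ h ∂ν‖ ≤ ∫ ‖h x - h y‖ ∂π` by the `p`-th moments to the
power `p - 1` times the transport cost of `π`, hence by a multiple of the Wasserstein distance.
Taking `ν` to be the Dirac mass at `0` also bounds `∫ w x • x ∂μ`. By Markov's inequality at least
half of the mass of `μ` lies in the ball of radius `2 R`, where `w` is bounded below, so the
denominators `∫ w ∂μ` stay away from `0` and the quotients inherit the estimate.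
-/

section LipschitzWithGrowth

variable {E F : Type*} [NormedAddCommGroup E] [NormedAddCommGroup F] {C r : ℝ} {h : E → F}

/-- `h` is locally Lipschitz, with a local Lipschitz constant that grows polynomially of order `r`.
For `r = 0` this is global Lipschitz continuity. -/
def LipschitzWithGrowth (C r : ℝ) (h : E → F) : Prop :=
  ∀ x y, ‖h x - h y‖ ≤ C * (1 + ‖x‖ + ‖y‖) ^ r * ‖x - y‖

namespace LipschitzWithGrowth

theorem continuous (hh : LipschitzWithGrowth C r h) : Continuous h := by
  refine continuous_iff_continuousAt.2 fun x ↦ tendsto_iff_norm_sub_tendsto_zero.2 <|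
    squeeze_zero (fun _ ↦ norm_nonneg _) (fun y ↦ hh y x) ?_
  have hbase : ∀ y : E, 1 + ‖y‖ + ‖x‖ ≠ 0 := fun y ↦ by positivity
  have hcont : Continuous fun y ↦ C * (1 + ‖y‖ + ‖x‖) ^ r * ‖y - x‖ :=
    (continuous_const.mul (.rpow_const (by fun_prop) fun y ↦ .inl (hbase y))).mul (by fun_prop)
  simpa using hcont.tendsto x

theorem mono {C' r' : ℝ} (hh : LipschitzWithGrowth C r h) (hC : C ≤ C') (hC' : 0 ≤ C')
    (hr : r ≤ r') : LipschitzWithGrowth C' r' h := fun x y ↦ by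
  have hbase : 1 ≤ 1 + ‖x‖ + ‖y‖ := by linarith [norm_nonneg x, norm_nonneg y]
  exact (hh x y).trans (by gcongr)

theorem norm_le (hh : LipschitzWithGrowth C r h) (hC : 0 ≤ C) (x : E) :
    ‖h x‖ ≤ ‖h 0‖ + C * (1 + ‖x‖) ^ (r + 1) := by
  have hx : ‖h x - h 0‖ ≤ C * (1 + ‖x‖) ^ r * ‖x‖ := by simpa using hh x 0
  calc ‖h x‖ ≤ ‖h 0‖ + ‖h x - h 0‖ := norm_le_norm_add_norm_sub' _ _
    _ ≤ ‖h 0‖ + C * (1 + ‖x‖) ^ r * (1 + ‖x‖) := by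
        gcongr
        exact hx.trans (by gcongr; linarith)
    _ = ‖h 0‖ + C * (1 + ‖x‖) ^ (r + 1) := by
        rw [Real.rpow_add_one (by positivity), mul_assoc]

theorem of_norm_sub_le_one {B : ℝ} (hC : 0 ≤ C) (hB : ∀ x, ‖h x‖ ≤ B)
    (hloc : ∀ x y, ‖x - y‖ ≤ 1 → ‖h x - h y‖ ≤ C * ‖x - y‖) :
    LipschitzWithGrowth (C + 2 * B) 0 h := fun x y ↦ by
  have hB0 : 0 ≤ B := (norm_nonneg _).trans (hB 0)
  rw [Real.rpow_zero, mul_one]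
  rcases le_total ‖x - y‖ 1 with hxy | hxy
  · exact (hloc x y hxy).trans (by gcongr; linarith)
  · calc ‖h x - h y‖ ≤ C + 2 * B := by linarith [norm_sub_le (h x) (h y), hB x, hB y]
      _ ≤ (C + 2 * B) * ‖x - y‖ := le_mul_of_one_le_right (by positivity) hxy

end LipschitzWithGrowth

end LipschitzWithGrowth

section WeightedIdentity

variable {E : Type*} [NormedAddCommGroup E] [NormedSpace ℝ E] {w : E → ℝ}

theorem norm_smul_sub_smul_le (w : E → ℝ) (x y : E) :
    ‖w x • x - w y • y‖ ≤ |w x| * ‖x - y‖ + |w x - w y| * ‖y‖ := by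
  have hsplit : w x • x - w y • y = w x • (x - y) + (w x - w y) • y := by
    rw [smul_sub, sub_smul]
    abel
  rw [hsplit]
  simpa only [norm_smul, Real.norm_eq_abs] using norm_add_le (w x • (x - y)) ((w x - w y) • y)

theorem LipschitzWithGrowth.smul_id {C r W : ℝ} (hw : LipschitzWithGrowth C r w)
    (hW : ∀ x, |w x| ≤ W) (hr : 0 ≤ r + 1) :
    LipschitzWithGrowth (W + C) (r + 1) fun x ↦ w x • x := fun x y ↦ by
  set D := 1 + ‖x‖ + ‖y‖
  have hD1 : 1 ≤ D := by linarith [norm_nonneg x, norm_nonneg y]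
  have hyD : ‖y‖ ≤ D := by linarith [norm_nonneg x]
  have hW0 : 0 ≤ W := (abs_nonneg _).trans (hW x)
  have hwxy : |w x - w y| ≤ C * D ^ r * ‖x - y‖ := hw x y
  calc ‖w x • x - w y • y‖ ≤ |w x| * ‖x - y‖ + |w x - w y| * ‖y‖ := norm_smul_sub_smul_le w x y
    _ ≤ (W * D ^ (r + 1)) * ‖x - y‖ + (C * D ^ r * ‖x - y‖) * D := by
        gcongr
        · exact (hW x).trans (le_mul_of_one_le_right hW0 (Real.one_le_rpow hD1 hr))
        · exact (abs_nonneg _).trans hwxy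
    _ = (W + C) * D ^ (r + 1) * ‖x - y‖ := by
        rw [Real.rpow_add_one (by positivity)]
        ring

theorem lipschitzWithGrowth_zero_of_decay {K B : ℝ} (hK : 0 ≤ K)
    (hB : ∀ x, |w x| * (1 + ‖x‖) ≤ B)
    (hloc : ∀ x y, ‖x - y‖ ≤ 1 → |w x - w y| * (1 + ‖x‖ + ‖y‖) ≤ K * ‖x - y‖) :
    LipschitzWithGrowth (B + K + 2 * B) 0 w ∧
      LipschitzWithGrowth (B + K + 2 * B) 0 fun x ↦ w x • x := by
  have hwB : ∀ x, |w x| ≤ B := fun x ↦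
    (le_mul_of_one_le_right (abs_nonneg _) (by linarith [norm_nonneg x])).trans (hB x)
  have hB0 : 0 ≤ B := (abs_nonneg _).trans (hwB 0)
  refine ⟨.of_norm_sub_le_one (by positivity) hwB fun x y hxy ↦ ?_,
    .of_norm_sub_le_one (by positivity) (fun x ↦ ?_) fun x y hxy ↦ ?_⟩
  · calc |w x - w y| ≤ |w x - w y| * (1 + ‖x‖ + ‖y‖) :=
          le_mul_of_one_le_right (abs_nonneg _) (by linarith [norm_nonneg x, norm_nonneg y])
      _ ≤ K * ‖x - y‖ := hloc x y hxy
      _ ≤ (B + K) * ‖x - y‖ := by gcongr; linarith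
  · rw [norm_smul, Real.norm_eq_abs]
    exact le_trans (by gcongr; linarith) (hB x)
  · calc ‖w x • x - w y • y‖ ≤ |w x| * ‖x - y‖ + |w x - w y| * ‖y‖ := norm_smul_sub_smul_le w x y
      _ ≤ B * ‖x - y‖ + |w x - w y| * (1 + ‖x‖ + ‖y‖) := by
          gcongr
          · exact hwB x
          · linarith [norm_nonneg x]
      _ ≤ (B + K) * ‖x - y‖ := by linarith [hloc x y hxy]

end WeightedIdentity

section ExponentialBounds

theorem abs_exp_sub_exp_le (a b : ℝ) :
    |Real.exp a - Real.exp b| ≤ |a - b| * max (Real.exp a) (Real.exp b) := by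
  wlog hba : b ≤ a generalizing a b with H
  · simpa only [abs_sub_comm, max_comm] using H b a (le_of_not_ge hba)
  rw [max_eq_left (Real.exp_le_exp.2 hba), abs_of_nonneg (sub_nonneg.2 (Real.exp_le_exp.2 hba)),
    abs_of_nonneg (sub_nonneg.2 hba)]
  have hb : Real.exp b = Real.exp (b - a) * Real.exp a := by rw [← Real.exp_add, sub_add_cancel]
  nlinarith [Real.exp_pos a, Real.add_one_le_exp (b - a)]

theorem one_add_le_mul_exp_rpow {ε l t : ℝ} (hε : 0 < ε) (hl : 0 < l) (ht : 0 ≤ t) :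
    1 + t ≤ (1 + (ε * l) ^ (-(1 / l))) * Real.exp (ε * t ^ l) := by
  have hone : 1 ≤ Real.exp (ε * t ^ l) := Real.one_le_exp (by positivity)
  have hpow : t ^ l ≤ (ε * l)⁻¹ * Real.exp (ε * l * t ^ l) := by
    rw [le_inv_mul_iff₀ (by positivity)]
    linarith [Real.add_one_le_exp (ε * l * t ^ l)]
  have hroot : t ≤ (ε * l) ^ (-(1 / l)) * Real.exp (ε * t ^ l) :=
    calc t = (t ^ l) ^ (1 / l) := by rw [one_div, Real.rpow_rpow_inv ht hl.ne']
      _ ≤ ((ε * l)⁻¹ * Real.exp (ε * l * t ^ l)) ^ (1 / l) := by gcongr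
      _ = (ε * l) ^ (-(1 / l)) * Real.exp (ε * t ^ l) := by
          rw [Real.mul_rpow (by positivity) (Real.exp_pos _).le, Real.inv_rpow (by positivity),
            ← Real.rpow_neg (by positivity), ← Real.exp_mul]
          congr 2
          field_simp
  linarith

theorem exists_one_add_rpow_mul_exp_neg_rpow_le {k l b : ℝ} (hk : 0 < k) (hl : 0 < l)
    (hb : 0 < b) : ∃ B > 0, ∀ t, 0 ≤ t → (1 + t) ^ k * Real.exp (-(b * t ^ l)) ≤ B := by
  refine ⟨(1 + (b / k * l) ^ (-(1 / l))) ^ k, by positivity, fun t ht ↦ ?_⟩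
  rw [Real.exp_neg, ← div_eq_mul_inv, div_le_iff₀ (Real.exp_pos _)]
  calc (1 + t) ^ k ≤ ((1 + (b / k * l) ^ (-(1 / l))) * Real.exp (b / k * t ^ l)) ^ k := by
        gcongr
        exact one_add_le_mul_exp_rpow (by positivity) hl ht
    _ = (1 + (b / k * l) ^ (-(1 / l))) ^ k * Real.exp (b * t ^ l) := by
        rw [Real.mul_rpow (by positivity) (Real.exp_pos _).le, ← Real.exp_mul]
        congr 2
        field_simp

end ExponentialBounds

section ExponentialWeight

variable {E : Type*} [NormedAddCommGroup E] {f : E → ℝ} {β L s : ℝ}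

theorem LipschitzWithGrowth.abs_exp_neg_mul_sub_le (hf : LipschitzWithGrowth L s f) (hβ : 0 ≤ β)
    (x y : E) : |Real.exp (-β * f x) - Real.exp (-β * f y)| ≤
      β * (L * (1 + ‖x‖ + ‖y‖) ^ s * ‖x - y‖) *
        max (Real.exp (-β * f x)) (Real.exp (-β * f y)) := by
  refine (abs_exp_sub_exp_le _ _).trans ?_
  rw [← mul_sub, abs_mul, abs_neg, abs_of_nonneg hβ]
  gcongr
  exact hf x y

theorem LipschitzWithGrowth.exp_neg_mul {m : ℝ} (hf : LipschitzWithGrowth L s f) (hβ : 0 ≤ β)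
    (hm : ∀ x, m ≤ f x) :
    LipschitzWithGrowth (β * L * Real.exp (-β * m)) s fun x ↦ Real.exp (-β * f x) := fun x y ↦ by
  have hexp : ∀ x, Real.exp (-β * f x) ≤ Real.exp (-β * m) := fun x ↦
    Real.exp_le_exp.2 (mul_le_mul_of_nonpos_left (hm x) (neg_nonpos.2 hβ))
  have hcoeff : 0 ≤ L * (1 + ‖x‖ + ‖y‖) ^ s * ‖x - y‖ := (norm_nonneg _).trans (hf x y)
  calc |Real.exp (-β * f x) - Real.exp (-β * f y)|
      ≤ β * (L * (1 + ‖x‖ + ‖y‖) ^ s * ‖x - y‖) *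
        max (Real.exp (-β * f x)) (Real.exp (-β * f y)) := hf.abs_exp_neg_mul_sub_le hβ x y
    _ ≤ β * (L * (1 + ‖x‖ + ‖y‖) ^ s * ‖x - y‖) * Real.exp (-β * m) := by
        gcongr
        exact max_le (hexp x) (hexp y)
    _ = β * L * Real.exp (-β * m) * (1 + ‖x‖ + ‖y‖) ^ s * ‖x - y‖ := by ring

theorem exists_one_add_norm_rpow_mul_exp_le {k l b c : ℝ} (hβ : 0 < β) (hk : 0 < k) (hl : 0 < l)
    (hc : 0 < c) (hgrowth : ∀ x, c * ‖x‖ ^ l - b ≤ f x) :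
    ∃ B > 0, ∀ x, (1 + ‖x‖) ^ k * Real.exp (-β * f x) ≤ B := by
  obtain ⟨B, hB, hBt⟩ := exists_one_add_rpow_mul_exp_neg_rpow_le hk hl (mul_pos hβ hc)
  refine ⟨B * Real.exp (β * b), by positivity, fun x ↦ ?_⟩
  have hexp : Real.exp (-β * f x) ≤ Real.exp (-(β * c * ‖x‖ ^ l)) * Real.exp (β * b) := by
    rw [← Real.exp_add, Real.exp_le_exp]
    nlinarith [hgrowth x]
  calc (1 + ‖x‖) ^ k * Real.exp (-β * f x)
      ≤ (1 + ‖x‖) ^ k * (Real.exp (-(β * c * ‖x‖ ^ l)) * Real.exp (β * b)) := by gcongr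
    _ = (1 + ‖x‖) ^ k * Real.exp (-(β * c * ‖x‖ ^ l)) * Real.exp (β * b) := by ring
    _ ≤ B * Real.exp (β * b) := by
        gcongr
        exact hBt _ (norm_nonneg x)

theorem LipschitzWithGrowth.abs_exp_neg_mul_sub_mul_le {B : ℝ} (hf : LipschitzWithGrowth L s f)
    (hβ : 0 ≤ β) (hL : 0 ≤ L) (hs : 0 ≤ s + 1)
    (hB : ∀ x, (1 + ‖x‖) ^ (s + 1) * Real.exp (-β * f x) ≤ B) {x y : E} (hxy : ‖x - y‖ ≤ 1) :
    |Real.exp (-β * f x) - Real.exp (-β * f y)| * (1 + ‖x‖ + ‖y‖) ≤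
      β * L * (2 ^ (s + 1) * B) * ‖x - y‖ := by
  set D := 1 + ‖x‖ + ‖y‖
  have hDw : ∀ z : E, D ≤ 2 * (1 + ‖z‖) →
      D ^ (s + 1) * Real.exp (-β * f z) ≤ 2 ^ (s + 1) * B := fun z hz ↦
    calc D ^ (s + 1) * Real.exp (-β * f z)
        ≤ (2 * (1 + ‖z‖)) ^ (s + 1) * Real.exp (-β * f z) := by gcongr
      _ = 2 ^ (s + 1) * ((1 + ‖z‖) ^ (s + 1) * Real.exp (-β * f z)) := by
          rw [Real.mul_rpow zero_le_two (by positivity), mul_assoc]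
      _ ≤ 2 ^ (s + 1) * B := by
          gcongr
          exact hB z
  have hmax : D ^ (s + 1) * max (Real.exp (-β * f x)) (Real.exp (-β * f y)) ≤ 2 ^ (s + 1) * B := by
    rw [mul_max_of_nonneg _ _ (by positivity)]
    exact max_le (hDw x (by linarith [norm_le_norm_add_norm_sub x y]))
      (hDw y (by linarith [norm_le_norm_add_norm_sub' x y]))
  calc |Real.exp (-β * f x) - Real.exp (-β * f y)| * D
      ≤ β * (L * D ^ s * ‖x - y‖) * max (Real.exp (-β * f x)) (Real.exp (-β * f y)) * D := by
        gcongr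
        exact hf.abs_exp_neg_mul_sub_le hβ x y
    _ = β * L * (D ^ (s + 1) * max (Real.exp (-β * f x)) (Real.exp (-β * f y))) * ‖x - y‖ := by
        rw [Real.rpow_add_one (by positivity)]
        ring
    _ ≤ β * L * (2 ^ (s + 1) * B) * ‖x - y‖ := by gcongr

variable [NormedSpace ℝ E]

theorem LipschitzWithGrowth.exists_exp_of_bddBelow {m : ℝ} (hf : LipschitzWithGrowth L s f)
    (hβ : 0 ≤ β) (hL : 0 ≤ L) (hs : 0 ≤ s + 1) (hm : ∀ x, m ≤ f x) :
    ∃ C > 0, LipschitzWithGrowth C (s + 1) (fun x ↦ Real.exp (-β * f x)) ∧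
      LipschitzWithGrowth C (s + 1) fun x ↦ Real.exp (-β * f x) • x := by
  set W := Real.exp (-β * m)
  have hWpos : 0 < W := Real.exp_pos _
  have hexp : ∀ x, |Real.exp (-β * f x)| ≤ W := fun x ↦ by
    rw [Real.abs_exp, Real.exp_le_exp]
    exact mul_le_mul_of_nonpos_left (hm x) (neg_nonpos.2 hβ)
  have hw := hf.exp_neg_mul hβ hm
  exact ⟨W + β * L * W, by positivity,
    hw.mono (by linarith) (by positivity) (by linarith), hw.smul_id hexp hs⟩

theorem LipschitzWithGrowth.exists_exp_of_coercive {l b c : ℝ} (hf : LipschitzWithGrowth L s f)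
    (hβ : 0 < β) (hL : 0 ≤ L) (hs : 0 ≤ s) (hl : 0 < l) (hc : 0 < c)
    (hgrowth : ∀ x, c * ‖x‖ ^ l - b ≤ f x) :
    ∃ C > 0, LipschitzWithGrowth C 0 (fun x ↦ Real.exp (-β * f x)) ∧
      LipschitzWithGrowth C 0 fun x ↦ Real.exp (-β * f x) • x := by
  obtain ⟨B, hB, hdecay⟩ :=
    exists_one_add_norm_rpow_mul_exp_le (k := s + 1) hβ (by positivity) hl hc hgrowth
  refine ⟨B + β * L * (2 ^ (s + 1) * B) + 2 * B, by positivity,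
    lipschitzWithGrowth_zero_of_decay (by positivity) (fun x ↦ ?_) fun x y hxy ↦
      hf.abs_exp_neg_mul_sub_mul_le hβ.le hL (by positivity) hdecay hxy⟩
  have hpow : 1 + ‖x‖ ≤ (1 + ‖x‖) ^ (s + 1) :=
    Real.self_le_rpow_of_one_le (by linarith [norm_nonneg x]) (by linarith)
  rw [Real.abs_exp, mul_comm]
  exact (mul_le_mul_of_nonneg_right hpow (Real.exp_pos _).le).trans (hdecay x)

theorem one_le_pM {l : ℝ} (hs : 0 ≤ s) : 1 ≤ pM s l := by
  unfold pM
  split_ifs <;> linarith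

theorem LipschitzWithGrowth.exists_exp {l b c p : ℝ} (hf : LipschitzWithGrowth L s f)
    (hβ : 0 < β) (hL : 0 ≤ L) (hs : 0 ≤ s) (hl : 0 ≤ l) (hc : 0 < c)
    (hgrowth : ∀ x, c * ‖x‖ ^ l - b ≤ f x) (hp : pM s l ≤ p) :
    ∃ C > 0, LipschitzWithGrowth C (p - 1) (fun x ↦ Real.exp (-β * f x)) ∧
      LipschitzWithGrowth C (p - 1) fun x ↦ Real.exp (-β * f x) • x := by
  rcases hl.eq_or_lt with rfl | hl
  · have hp' : s + 2 ≤ p := by simpa [pM] using hp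
    have hm : ∀ x, c - b ≤ f x := by simpa using hgrowth
    obtain ⟨C, hC, hw, hwx⟩ := hf.exists_exp_of_bddBelow hβ.le hL (by positivity) hm
    exact ⟨C, hC, hw.mono le_rfl hC.le (by linarith), hwx.mono le_rfl hC.le (by linarith)⟩
  · have hp' : 1 ≤ p := by simpa [pM, hl.ne'] using hp
    obtain ⟨C, hC, hw, hwx⟩ := hf.exists_exp_of_coercive hβ hL hs hl hc hgrowth
    exact ⟨C, hC, hw.mono le_rfl hC.le (by linarith), hwx.mono le_rfl hC.le (by linarith)⟩

end ExponentialWeight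

section Wasserstein

variable {E : Type*} [NormedAddCommGroup E] [MeasurableSpace E]

/-- `π` is a coupling of `μ` and `ν`: a measure on the product with these marginals. -/
structure IsCoupling {X Y : Type*} [MeasurableSpace X] [MeasurableSpace Y]
    (π : Measure (X × Y)) (μ : Measure X) (ν : Measure Y) : Prop where
  fst_eq : π.fst = μ
  snd_eq : π.snd = ν

/-- The Wasserstein-`p` distance of two measures on a normed space. It takes values in `ℝ≥0∞`, so
that measures without a coupling, or without finite `p`-th moments, may be at distance `∞`. -/
def wassersteinEDist (p : ℝ≥0∞) (μ ν : Measure E) : ℝ≥0∞ :=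
  ⨅ π : {π : Measure (E × E) // IsCoupling π μ ν}, eLpNorm (fun z ↦ z.1 - z.2) p π.1

namespace IsCoupling

variable {X Y : Type*} [MeasurableSpace X] [MeasurableSpace Y] {π : Measure (X × Y)}
  {μ : Measure X} {ν : Measure Y}

theorem prod (μ : Measure X) (ν : Measure Y) [IsProbabilityMeasure μ] [IsProbabilityMeasure ν] :
    IsCoupling (μ.prod ν) μ ν :=
  ⟨Measure.fst_prod, Measure.snd_prod⟩

theorem measurePreserving_fst (hπ : IsCoupling π μ ν) : MeasurePreserving Prod.fst π μ :=
  ⟨measurable_fst, hπ.fst_eq⟩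

theorem measurePreserving_snd (hπ : IsCoupling π μ ν) : MeasurePreserving Prod.snd π ν :=
  ⟨measurable_snd, hπ.snd_eq⟩

theorem isProbabilityMeasure (hπ : IsCoupling π μ ν) [IsProbabilityMeasure μ] :
    IsProbabilityMeasure π :=
  ⟨by rw [← Measure.fst_univ, hπ.fst_eq, measure_univ]⟩

end IsCoupling

variable [BorelSpace E] [SecondCountableTopology E] {μ ν : Measure E}

theorem IsCoupling.eLpNorm_fst {π : Measure (E × E)} (hπ : IsCoupling π μ ν) (p : ℝ≥0∞) :
    eLpNorm (fun z ↦ z.1) p π = eLpNorm id p μ :=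
  eLpNorm_comp_measurePreserving aestronglyMeasurable_id hπ.measurePreserving_fst

theorem IsCoupling.eLpNorm_snd {π : Measure (E × E)} (hπ : IsCoupling π μ ν) (p : ℝ≥0∞) :
    eLpNorm (fun z ↦ z.2) p π = eLpNorm id p ν :=
  eLpNorm_comp_measurePreserving aestronglyMeasurable_id hπ.measurePreserving_snd

theorem wassersteinEDist_le_add {p : ℝ≥0∞} (hp : 1 ≤ p) (μ ν : Measure E)
    [IsProbabilityMeasure μ] [IsProbabilityMeasure ν] :
    wassersteinEDist p μ ν ≤ eLpNorm id p μ + eLpNorm id p ν := by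
  have hπ := IsCoupling.prod μ ν
  calc wassersteinEDist p μ ν ≤ eLpNorm (fun z ↦ z.1 - z.2) p (μ.prod ν) :=
        iInf_le_of_le ⟨μ.prod ν, hπ⟩ le_rfl
    _ ≤ eLpNorm (fun z ↦ z.1) p (μ.prod ν) + eLpNorm (fun z ↦ z.2) p (μ.prod ν) :=
        eLpNorm_sub_le (by fun_prop) (by fun_prop) hp
    _ = eLpNorm id p μ + eLpNorm id p ν := by rw [hπ.eLpNorm_fst, hπ.eLpNorm_snd]

end Wasserstein

section Expectation

theorem lintegral_enorm_rpow_mul_enorm_le {α ε ε' : Type*} [MeasurableSpace α]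
    {μ : Measure α} [TopologicalSpace ε] [ContinuousENorm ε] [TopologicalSpace ε']
    [ContinuousENorm ε'] {g : α → ε} {h : α → ε'} {p : ℝ} (hp : 1 ≤ p)
    (hg : AEStronglyMeasurable g μ) (hh : AEStronglyMeasurable h μ) :
    ∫⁻ a, ‖g a‖ₑ ^ (p - 1) * ‖h a‖ₑ ∂μ ≤
      eLpNorm g (.ofReal p) μ ^ (p - 1) * eLpNorm h (.ofReal p) μ := by
  have hp0 : 0 < p := by positivity
  have hexp : 1 / p * (p - 1) = 1 - 1 / p := by field_simp
  have hexp' : p * (1 - 1 / p) = p - 1 := by field_simp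
  have hle : 0 ≤ 1 - 1 / p := sub_nonneg.2 ((div_le_one hp0).2 hp)
  simp only [eLpNorm_eq_lintegral_rpow_enorm_toReal (ofReal_pos.2 hp0).ne' ofReal_ne_top,
    toReal_ofReal hp0.le, ← ENNReal.rpow_mul, hexp]
  refine le_trans (le_of_eq (lintegral_congr fun a ↦ ?_)) <|
    ENNReal.lintegral_mul_norm_pow_le (hg.enorm.pow_const p) (hh.enorm.pow_const p) hle
      (by positivity) (sub_add_cancel 1 (1 / p))
  rw [← ENNReal.rpow_mul, ← ENNReal.rpow_mul, hexp', mul_one_div_cancel hp0.ne', ENNReal.rpow_one]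

variable {E F : Type*} [NormedAddCommGroup E] [MeasurableSpace E] [BorelSpace E]
  [SecondCountableTopology E] [NormedAddCommGroup F] {μ ν : Measure E} {h : E → F} {C p R : ℝ}

theorem LipschitzWithGrowth.integrable [IsFiniteMeasure μ] (hh : LipschitzWithGrowth C (p - 1) h)
    (hC : 0 ≤ C) (hp : 0 ≤ p) (hμ : MemLp id (.ofReal p) μ) : Integrable h μ := by
  have hnorm : MemLp (fun x : E ↦ ‖x‖) (.ofReal p) μ := hμ.norm
  have hbase : MemLp (fun x : E ↦ 1 + ‖x‖) (.ofReal p) μ := (memLp_const (1 : ℝ)).add hnorm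
  have hpow : Integrable (fun x : E ↦ (1 + ‖x‖) ^ p) μ := by
    refine hbase.integrable_norm_rpow'.congr (ae_of_all _ fun x ↦ ?_)
    have hx : ‖1 + ‖x‖‖ = 1 + ‖x‖ := Real.norm_of_nonneg (by positivity)
    simp only [toReal_ofReal hp, hx]
  refine ((integrable_const ‖h 0‖).add (hpow.const_mul C)).mono'
    hh.continuous.aestronglyMeasurable (ae_of_all _ fun x ↦ ?_)
  simpa using hh.norm_le hC x

theorem eLpNorm_one_add_norm_add_norm_le [IsProbabilityMeasure μ] {π : Measure (E × E)}
    {q : ℝ≥0∞} (hq : 1 ≤ q) (hπ : IsCoupling π μ ν) :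
    eLpNorm (fun z : E × E ↦ 1 + ‖z.1‖ + ‖z.2‖) q π ≤
      1 + eLpNorm id q μ + eLpNorm id q ν := by
  have := hπ.isProbabilityMeasure
  have hfst : eLpNorm (fun z : E × E ↦ ‖z.1‖) q π = eLpNorm id q μ := by
    rw [eLpNorm_norm, hπ.eLpNorm_fst]
  have hsnd : eLpNorm (fun z : E × E ↦ ‖z.2‖) q π = eLpNorm id q ν := by
    rw [eLpNorm_norm, hπ.eLpNorm_snd]
  have hone : eLpNorm (fun _ : E × E ↦ (1 : ℝ)) q π = 1 := by
    rw [eLpNorm_const _ (zero_lt_one.trans_le hq).ne' (IsProbabilityMeasure.ne_zero π)]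
    simp
  calc eLpNorm (fun z : E × E ↦ 1 + ‖z.1‖ + ‖z.2‖) q π
      ≤ eLpNorm (fun z : E × E ↦ 1 + ‖z.1‖) q π + eLpNorm (fun z : E × E ↦ ‖z.2‖) q π :=
        eLpNorm_add_le (by fun_prop) (by fun_prop) hq
    _ ≤ eLpNorm (fun _ : E × E ↦ (1 : ℝ)) q π + eLpNorm (fun z : E × E ↦ ‖z.1‖) q π
        + eLpNorm (fun z : E × E ↦ ‖z.2‖) q π := by
        gcongr
        exact eLpNorm_add_le (by fun_prop) (by fun_prop) hq
    _ = 1 + eLpNorm id q μ + eLpNorm id q ν := by rw [hone, hfst, hsnd]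

variable [NormedSpace ℝ F] [IsProbabilityMeasure μ] [IsProbabilityMeasure ν]

theorem LipschitzWithGrowth.enorm_integral_sub_le_eLpNorm (hh : LipschitzWithGrowth C (p - 1) h)
    (hC : 0 ≤ C) (hp : 1 ≤ p) (hμ : MemLp id (.ofReal p) μ) (hν : MemLp id (.ofReal p) ν)
    {π : Measure (E × E)} (hπ : IsCoupling π μ ν) :
    ‖∫ x, h x ∂μ - ∫ x, h x ∂ν‖ₑ ≤
      .ofReal C * (1 + eLpNorm id (.ofReal p) μ + eLpNorm id (.ofReal p) ν) ^ (p - 1) *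
        eLpNorm (fun z ↦ z.1 - z.2) (.ofReal p) π := by
  have hp0 : 0 ≤ p := by positivity
  have hp1 : 0 ≤ p - 1 := sub_nonneg.2 hp
  have hμi := hh.integrable hC hp0 hμ
  have hνi := hh.integrable hC hp0 hν
  have hdiff : ∫ x, h x ∂μ - ∫ x, h x ∂ν = ∫ z, (h z.1 - h z.2) ∂π := by
    rw [integral_sub (f := fun z : E × E ↦ h z.1) (g := fun z : E × E ↦ h z.2)
      (hπ.measurePreserving_fst.integrable_comp_of_integrable hμi)
      (hπ.measurePreserving_snd.integrable_comp_of_integrable hνi), ← hπ.fst_eq, ← hπ.snd_eq,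
      Measure.fst, Measure.snd, integral_map (by fun_prop) hh.continuous.aestronglyMeasurable,
      integral_map (by fun_prop) hh.continuous.aestronglyMeasurable]
  have hpt : ∀ z : E × E, ‖h z.1 - h z.2‖ₑ ≤
      .ofReal C * (‖1 + ‖z.1‖ + ‖z.2‖‖ₑ ^ (p - 1) * ‖z.1 - z.2‖ₑ) := fun z ↦ by
    rw [← ofReal_norm, ← ofReal_norm, ← ofReal_norm, Real.norm_of_nonneg (by positivity),
      ofReal_rpow_of_nonneg (by positivity) hp1, ← ofReal_mul (by positivity), ← ofReal_mul hC,
      ← mul_assoc]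
    exact ofReal_le_ofReal (hh z.1 z.2)
  calc ‖∫ x, h x ∂μ - ∫ x, h x ∂ν‖ₑ ≤ ∫⁻ z, ‖h z.1 - h z.2‖ₑ ∂π := by
        rw [hdiff]
        exact enorm_integral_le_lintegral_enorm _
    _ ≤ .ofReal C * ∫⁻ z, ‖1 + ‖z.1‖ + ‖z.2‖‖ₑ ^ (p - 1) * ‖z.1 - z.2‖ₑ ∂π := by
        rw [← lintegral_const_mul' _ _ ofReal_ne_top]
        exact lintegral_mono hpt
    _ ≤ .ofReal C * (eLpNorm (fun z : E × E ↦ 1 + ‖z.1‖ + ‖z.2‖) (.ofReal p) π ^ (p - 1) *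
          eLpNorm (fun z ↦ z.1 - z.2) (.ofReal p) π) := by
        gcongr
        exact lintegral_enorm_rpow_mul_enorm_le hp (by fun_prop) (by fun_prop)
    _ ≤ _ := by
        rw [mul_assoc]
        gcongr
        exact eLpNorm_one_add_norm_add_norm_le (one_le_ofReal.2 hp) hπ

theorem LipschitzWithGrowth.norm_integral_sub_le (hh : LipschitzWithGrowth C (p - 1) h)
    (hC : 0 ≤ C) (hp : 1 ≤ p) (hR : 0 ≤ R) (hμ : eLpNorm id (.ofReal p) μ ≤ .ofReal R)
    (hν : eLpNorm id (.ofReal p) ν ≤ .ofReal R) :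
    ‖∫ x, h x ∂μ - ∫ x, h x ∂ν‖ ≤
      C * (1 + R + R) ^ (p - 1) * (wassersteinEDist (.ofReal p) μ ν).toReal := by
  have hp1 : 0 ≤ p - 1 := sub_nonneg.2 hp
  have : Nonempty {π : Measure (E × E) // IsCoupling π μ ν} := ⟨μ.prod ν, .prod μ ν⟩
  have hfin : wassersteinEDist (.ofReal p) μ ν ≠ ∞ :=
    ((wassersteinEDist_le_add (one_le_ofReal.2 hp) μ ν).trans (add_le_add hμ hν)).trans_lt
      (add_lt_top.2 ⟨ofReal_lt_top, ofReal_lt_top⟩) |>.ne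
  have hconst : .ofReal C * (1 + eLpNorm id (.ofReal p) μ + eLpNorm id (.ofReal p) ν) ^ (p - 1) ≤
      ENNReal.ofReal (C * (1 + R + R) ^ (p - 1)) := by
    rw [ofReal_mul hC, ← ofReal_rpow_of_nonneg (by positivity) hp1,
      ofReal_add (by positivity) hR, ofReal_add zero_le_one hR, ofReal_one]
    gcongr
  have hW : ‖∫ x, h x ∂μ - ∫ x, h x ∂ν‖ₑ ≤
      .ofReal (C * (1 + R + R) ^ (p - 1)) * wassersteinEDist (.ofReal p) μ ν := by
    rw [wassersteinEDist, ENNReal.mul_iInf fun htop ↦ absurd htop ofReal_ne_top]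
    exact le_iInf fun π ↦ (hh.enorm_integral_sub_le_eLpNorm hC hp
      ⟨aestronglyMeasurable_id, hμ.trans_lt ofReal_lt_top⟩
      ⟨aestronglyMeasurable_id, hν.trans_lt ofReal_lt_top⟩ π.2).trans (by gcongr)
  have := toReal_mono (mul_ne_top ofReal_ne_top hfin) hW
  rwa [toReal_mul, toReal_ofReal (by positivity), toReal_enorm] at this

theorem LipschitzWithGrowth.norm_integral_le [CompleteSpace F]
    (hh : LipschitzWithGrowth C (p - 1) h) (hC : 0 ≤ C) (hp : 1 ≤ p) (hR : 0 ≤ R)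
    (hμ : eLpNorm id (.ofReal p) μ ≤ .ofReal R) :
    ‖∫ x, h x ∂μ‖ ≤ ‖h 0‖ + C * (1 + R + R) ^ (p - 1) * R := by
  have hp0 : ENNReal.ofReal p ≠ 0 := (ofReal_pos.2 (by positivity)).ne'
  have hdirac : eLpNorm id (.ofReal p) (.dirac (0 : E)) = 0 := by
    rw [eLpNorm_dirac _ _ hp0, id, enorm_zero]
  have hW : (wassersteinEDist (.ofReal p) μ (.dirac 0)).toReal ≤ R := by
    refine toReal_le_of_le_ofReal hR ((wassersteinEDist_le_add (one_le_ofReal.2 hp) _ _).trans ?_)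
    rwa [hdirac, add_zero]
  calc ‖∫ x, h x ∂μ‖ ≤ ‖h 0‖ + ‖∫ x, h x ∂μ - h 0‖ := norm_le_norm_add_norm_sub' _ _
    _ = ‖h 0‖ + ‖∫ x, h x ∂μ - ∫ x, h x ∂.dirac 0‖ := by rw [integral_dirac]
    _ ≤ ‖h 0‖ + C * (1 + R + R) ^ (p - 1) * R := by
        gcongr
        exact (hh.norm_integral_sub_le hC hp hR hμ (by rw [hdirac]; exact zero_le)).trans
          (by gcongr)

end Expectation

section WeightedMean

variable {E : Type*} [NormedAddCommGroup E]

theorem norm_inv_smul_sub_inv_smul_le [NormedSpace ℝ E] {z a b T K : ℝ} {m n : E} (hz : 0 < z)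
    (ha : z ≤ a) (hb : z ≤ b) (hmn : ‖m - n‖ ≤ T) (hab : |a - b| ≤ T) (hn : ‖n‖ ≤ K) :
    ‖a⁻¹ • m - b⁻¹ • n‖ ≤ z⁻¹ * (1 + z⁻¹ * K) * T := by
  have ha0 : 0 < a := hz.trans_le ha
  have hb0 : 0 < b := hz.trans_le hb
  have hT : 0 ≤ T := (norm_nonneg _).trans hmn
  have hsplit : a⁻¹ • m - b⁻¹ • n = a⁻¹ • (m - n) + (a⁻¹ * b⁻¹ * (b - a)) • n := by
    have hinv : a⁻¹ * b⁻¹ * (b - a) = a⁻¹ - b⁻¹ := by field_simp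
    rw [hinv, smul_sub, sub_smul]
    abel
  calc ‖a⁻¹ • m - b⁻¹ • n‖ ≤ ‖a⁻¹ • (m - n)‖ + ‖(a⁻¹ * b⁻¹ * (b - a)) • n‖ :=
        hsplit ▸ norm_add_le _ _
    _ = a⁻¹ * ‖m - n‖ + a⁻¹ * b⁻¹ * |a - b| * ‖n‖ := by
        rw [norm_smul, norm_smul, Real.norm_eq_abs, Real.norm_eq_abs, abs_mul,
          abs_of_pos (inv_pos.2 ha0), abs_of_pos (mul_pos (inv_pos.2 ha0) (inv_pos.2 hb0)),
          abs_sub_comm b a]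
    _ ≤ z⁻¹ * T + z⁻¹ * z⁻¹ * T * K := by gcongr
    _ = z⁻¹ * (1 + z⁻¹ * K) * T := by ring

variable [MeasurableSpace E]

/-- The mean of `μ` reweighted by `w`; it is `0` by convention if `∫ w ∂μ = 0`. -/
def weightedMean [NormedSpace ℝ E] (w : E → ℝ) (μ : Measure E) : E :=
  (∫ x, w x ∂μ)⁻¹ • ∫ x, w x • x ∂μ

variable {w : E → ℝ} {p R z C : ℝ}

theorem half_le_integral_of_le_on_ball {μ : Measure E} [IsProbabilityMeasure μ] (hR : 0 < R)
    (hz : 0 ≤ z) (hw0 : ∀ x, 0 ≤ w x) (hw : ∀ x, ‖x‖ ≤ 2 * R → z ≤ w x) (hwi : Integrable w μ)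
    (hμi : Integrable (fun x : E ↦ ‖x‖) μ) (hμ : ∫ x, ‖x‖ ∂μ ≤ R) : z / 2 ≤ ∫ x, w x ∂μ := by
  have hpt : ∀ x : E, z * (1 - ‖x‖ / (2 * R)) ≤ w x := fun x ↦ by
    rcases le_total ‖x‖ (2 * R) with hx | hx
    · exact (mul_le_of_le_one_right hz (sub_le_self 1 (by positivity))).trans (hw x hx)
    · refine (mul_nonpos_of_nonneg_of_nonpos hz ?_).trans (hw0 x)
      rwa [sub_nonpos, one_le_div (by positivity)]
  have hint : Integrable (fun x : E ↦ z * (1 - ‖x‖ / (2 * R))) μ :=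
    ((integrable_const 1).sub (hμi.div_const _)).const_mul z
  have hratio : (∫ x, ‖x‖ ∂μ) / (2 * R) ≤ 1 / 2 := by
    rw [div_le_iff₀ (by positivity)]
    linarith
  calc z / 2 ≤ z * (1 - (∫ x, ‖x‖ ∂μ) / (2 * R)) := by nlinarith
    _ = ∫ x, z * (1 - ‖x‖ / (2 * R)) ∂μ := by
        rw [integral_const_mul, integral_sub (integrable_const 1) (hμi.div_const _), integral_div]
        simp
    _ ≤ ∫ x, w x ∂μ := integral_mono hint hwi hpt

variable [BorelSpace E] [SecondCountableTopology E]

theorem integral_norm_le_of_eLpNorm_le {μ : Measure E} [IsProbabilityMeasure μ] {q : ℝ≥0∞}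
    (hq : 1 ≤ q) (hR : 0 ≤ R) (hμ : eLpNorm id q μ ≤ .ofReal R) : ∫ x, ‖x‖ ∂μ ≤ R := by
  have hone : eLpNorm id 1 μ ≤ .ofReal R :=
    (eLpNorm_le_eLpNorm_of_exponent_le hq aestronglyMeasurable_id).trans hμ
  rw [integral_norm_eq_lintegral_enorm (f := fun x : E ↦ x) aestronglyMeasurable_id]
  exact toReal_le_of_le_ofReal hR (by simpa [eLpNorm_one_eq_lintegral_enorm] using hone)

variable [NormedSpace ℝ E] [CompleteSpace E]

theorem norm_weightedMean_sub_le {μ ν : Measure E} [IsProbabilityMeasure μ]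
    [IsProbabilityMeasure ν] (hp : 1 ≤ p) (hC : 0 ≤ C) (hR : 0 < R) (hz : 0 < z)
    (hw0 : ∀ x, 0 ≤ w x) (hwz : ∀ x, ‖x‖ ≤ 2 * R → z ≤ w x)
    (hw : LipschitzWithGrowth C (p - 1) w) (hwx : LipschitzWithGrowth C (p - 1) fun x ↦ w x • x)
    (hμ : eLpNorm id (.ofReal p) μ ≤ .ofReal R) (hν : eLpNorm id (.ofReal p) ν ≤ .ofReal R) :
    ‖weightedMean w μ - weightedMean w ν‖ ≤
      (z / 2)⁻¹ * (1 + (z / 2)⁻¹ * (C * (1 + R + R) ^ (p - 1) * R)) *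
        (C * (1 + R + R) ^ (p - 1) * (wassersteinEDist (.ofReal p) μ ν).toReal) := by
  have hmass : ∀ ρ : Measure E, IsProbabilityMeasure ρ →
      eLpNorm id (.ofReal p) ρ ≤ .ofReal R → z / 2 ≤ ∫ x, w x ∂ρ := fun ρ _ hρ ↦ by
    have hLp : MemLp id (.ofReal p) ρ := ⟨aestronglyMeasurable_id, hρ.trans_lt ofReal_lt_top⟩
    exact half_le_integral_of_le_on_ball hR hz.le hw0 hwz (hw.integrable hC (by positivity) hLp)
      (hLp.integrable (one_le_ofReal.2 hp)).norm
      (integral_norm_le_of_eLpNorm_le (one_le_ofReal.2 hp) hR.le hρ)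
  exact norm_inv_smul_sub_inv_smul_le (half_pos hz) (hmass μ ‹_› hμ) (hmass ν ‹_› hν)
    (hwx.norm_integral_sub_le hC hp hR.le hμ hν) (hw.norm_integral_sub_le hC hp hR.le hμ hν)
    (by simpa using hwx.norm_integral_le hC hp hR.le hν)

theorem weighted_mean_stability_general {f : E → ℝ} {β L s l b c : ℝ} (hβ : 0 < β) (hL : 0 ≤ L)
    (hs : 0 ≤ s) (hl : 0 ≤ l) (hc : 0 < c) (hf : LipschitzWithGrowth L s f)
    (hgrowth : ∀ x, c * ‖x‖ ^ l - b ≤ f x) (hR : 0 < R) (hp : pM s l ≤ p) :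
    ∃ K > 0, ∀ μ ν : Measure E, IsProbabilityMeasure μ → IsProbabilityMeasure ν →
      eLpNorm id (.ofReal p) μ ≤ .ofReal R → eLpNorm id (.ofReal p) ν ≤ .ofReal R →
      ‖weightedMean (fun x ↦ Real.exp (-β * f x)) μ -
          weightedMean (fun x ↦ Real.exp (-β * f x)) ν‖ ≤
        K * (wassersteinEDist (.ofReal p) μ ν).toReal := by
  obtain ⟨C, hC, hw, hwx⟩ := hf.exists_exp hβ hL hs hl hc hgrowth hp
  have hp1 : 1 ≤ p := (one_le_pM hs).trans hp
  set z := Real.exp (-β * (‖f 0‖ + L * (1 + 2 * R) ^ (s + 1)))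
  have hz : 0 < z := Real.exp_pos _
  have hwz : ∀ x, ‖x‖ ≤ 2 * R → z ≤ Real.exp (-β * f x) := fun x hx ↦ by
    refine Real.exp_le_exp.2 (mul_le_mul_of_nonpos_left ?_ (neg_nonpos.2 hβ.le))
    exact (Real.le_norm_self _).trans ((hf.norm_le hL x).trans (by gcongr))
  set A := C * (1 + R + R) ^ (p - 1)
  refine ⟨(z / 2)⁻¹ * (1 + (z / 2)⁻¹ * (A * R)) * A, by positivity, fun μ ν _ _ hμ hν ↦ ?_⟩
  rw [mul_assoc]
  exact norm_weightedMean_sub_le hp1 hC.le hR hz (fun x ↦ (Real.exp_pos _).le) hwz hw hwx hμ hν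

end WeightedMean

section EuclideanSpace

variable {d : ℕ} {p R : ℝ}

theorem MomLE.eLpNorm_le {μ : Measure (Rd d)} (hμ : MomLE p R μ) (hp : 0 < p) (hR : 0 ≤ R) :
    eLpNorm id (.ofReal p) μ ≤ .ofReal R := by
  rw [eLpNorm_eq_lintegral_rpow_enorm_toReal (ofReal_pos.2 hp).ne' ofReal_ne_top,
    toReal_ofReal hp.le, one_div, ENNReal.rpow_inv_le_iff hp, ofReal_rpow_of_nonneg hR hp.le]
  exact hμ

theorem Wp_eq_toReal_wassersteinEDist (hp : 0 < p) (μ ν : Measure (Rd d)) :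
    Wp p μ ν = (wassersteinEDist (.ofReal p) μ ν).toReal := by
  unfold Wp wassersteinEDist
  congr 2
  ext c
  simp only [eLpNorm_eq_lintegral_rpow_enorm_toReal (ofReal_pos.2 hp).ne' ofReal_ne_top,
    toReal_ofReal hp.le, Set.mem_ofPred_eq, Set.mem_range, Subtype.exists]
  constructor
  · rintro ⟨π, hfst, hsnd, rfl⟩
    exact ⟨π, ⟨hfst, hsnd⟩, rfl⟩
  · rintro ⟨π, ⟨hfst, hsnd⟩, rfl⟩
    exact ⟨π, hfst, hsnd, rfl⟩

end EuclideanSpace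

/-- **Basic Wasserstein stability estimate for the weighted mean.**
If `f ∈ A(s, ℓ, u)`, then for every `R > 0` and `p ≥ p_M(s, ℓ)` there is `L_M > 0`
such that `|M_β(μ) - M_β(ν)| ≤ L_M ⬝ W_p(μ, ν)` for all `μ, ν ∈ P_{p,R}(ℝ^d)`. -/
theorem weighted_mean_stability
    (β : ℝ) (hβ : 0 < β) (d : ℕ) (hd : 1 ≤ d)
    (s ℓ u : ℝ) (hs : 0 ≤ s) (hℓ : 0 ≤ ℓ) (hℓu : ℓ ≤ u)
    (f : Rd d → ℝ) (hf : ClassA s ℓ u f)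
    (R : ℝ) (hR : 0 < R) (p : ℝ) (hp : pM s ℓ ≤ p) :
    ∃ L > 0, ∀ μ ν : Measure (Rd d),
      IsProbabilityMeasure μ → IsProbabilityMeasure ν →
      MomLE p R μ → MomLE p R ν →
      ‖wMean β f μ - wMean β f ν‖ ≤ L * Wp p μ ν := by
  have hp0 : 0 < p := zero_lt_one.trans_le ((one_le_pM hs).trans hp)
  obtain ⟨L, hL, hlip⟩ := hf.lip
  obtain ⟨c, hc, C, -, hgrowth⟩ := hf.growth_lower
  obtain ⟨K, hK, hstab⟩ := weighted_mean_stability_general hβ hL.le hs hℓ hc hlip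
    (b := C - fStar f) (fun x ↦ by linarith [hgrowth x]) hR hp
  refine ⟨K, hK, fun μ ν hμ hν hmμ hmν ↦ ?_⟩
  rw [Wp_eq_toReal_wassersteinEDist hp0]
  exact hstab μ ν hμ hν (hmμ.eLpNorm_le hp0 hR.le) (hmν.eLpNorm_le hp0 hR.le)

end
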